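/- Let n ≥ 1 and k ≥ 1. For each j with 1 ≤ j ≤ 2n+1, the number of paths p in 𝒫(n,1,1) with exactly k circular peaks such that exactly j of the vertices s_0, s_1, …, s_{2n} satisfy s_i ≤ 0 equals (1/(2n+1))·(C(n,k−1)·C(n,k) + C(n+1,k)·C(n−1,k−1)); in particular this count is independent of j and equals the Narayana number N(n,k). -/

import Mathlib

open Finset

/-- The sum of the first `m` entries of a sequence `p` of length `N` (the height `s_m`). -/
def psum {N : ℕ} (p : Fin N → ℤ) (m : ℕ) : ℤ :=
  ∑ j ∈ Finset.univ.filter (fun j : Fin N => (j : ℕ) < m), p j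

/-!
Repeat the steps of a path of length `N = 2n + 1` periodically. As the path rises by `1` per period,
the vertices of one period lie at distinct heights above a line of slope `1 / N`. Starting the path
at the vertex of rank `j` in that order leaves exactly `j` vertices on or below the axis, so exactly
one cyclic shift of every path does, while all shifts have the same number of circular peaks. Hence
the count is `1 / N` times the number of all paths with `k` circular peaks.

A path that starts with an up step has no peak at its closing, so its circular peaks are ordinary
ones, and such paths with `a` up steps, `b` down steps and `k` peaks are counted by recursion on the
first step. Reading backwards and exchanging up and down steps reduces the paths that start with a
down step to those, with the roles of `a` and `b` exchanged.
-/

namespace ChungFeller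

section DoubleCounting

lemma card_filter_mul_card_of_existsUnique {ι X : Type*} [Fintype ι] (e : ι → Equiv.Perm X)
    (T : Finset X) (P : X → Prop) [DecidablePred P] (hT : ∀ i x, e i x ∈ T ↔ x ∈ T)
    (hP : ∀ x ∈ T, ∃! i, P (e i x)) :
    #{x ∈ T | P x} * Fintype.card ι = #T := by
  have card_index : ∀ x ∈ T, #{i | P (e i x)} = 1 := fun x hx =>
    (Fintype.existsUnique_iff_card_one _).1 (hP x hx)
  have card_translate : ∀ i, #{x ∈ T | P (e i x)} = #{x ∈ T | P x} := fun i =>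
    card_equiv (e i) fun x => by simp only [mem_filter, hT]
  calc #{x ∈ T | P x} * Fintype.card ι = ∑ i, #{x ∈ T | P (e i x)} := by
        simp only [card_translate, sum_const, card_univ, smul_eq_mul, mul_comm]
    _ = ∑ x ∈ T, #{i | P (e i x)} :=
        (sum_card_bipartiteAbove_eq_sum_card_bipartiteBelow fun x i => P (e i x)).symm
    _ = #T := by rw [sum_congr rfl card_index, card_eq_sum_ones]

lemma existsUnique_card_filter_le_eq {ι α : Type*} [Fintype ι] [LinearOrder α] {f : ι → α}
    (hf : Function.Injective f) {j : ℕ} (hj1 : 1 ≤ j) (hj2 : j ≤ Fintype.card ι) :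
    ∃! r, #{i | f i ≤ f r} = j := by
  have le_of_rank_le : ∀ a b, #{i | f i ≤ f b} ≤ #{i | f i ≤ f a} → f b ≤ f a := by
    intro a b hab
    by_contra! hlt
    have hsub : univ.filter (f · ≤ f a) ⊆ univ.filter (f · ≤ f b) :=
      monotone_filter_right _ fun i _ hi => hi.trans hlt.le
    have hb : b ∈ univ.filter (f · ≤ f a) := by
      simp [eq_of_subset_of_card_le hsub hab]
    exact hlt.not_ge (mem_filter.1 hb).2
  have rank_injective : Function.Injective fun r => #{i | f i ≤ f r} := fun a b hab =>
    hf ((le_of_rank_le b a hab.le).antisymm (le_of_rank_le a b hab.ge))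
  have rank_mapsTo : Set.MapsTo (fun r => #{i | f i ≤ f r}) (univ : Finset ι)
      (Icc 1 (Fintype.card ι)) := fun r _ =>
    mem_coe.2 <| mem_Icc.2 ⟨card_pos.2 ⟨r, by simp⟩, card_le_univ _⟩
  obtain ⟨r, -, hr⟩ := surjOn_of_injOn_of_card_le _ rank_mapsTo rank_injective.injOn
    (by simp) (mem_coe.2 (mem_Icc.2 ⟨hj1, hj2⟩))
  exact ⟨r, hr, fun s hs => rank_injective (hs.trans hr.symm)⟩

end DoubleCounting

section Rotation

variable {N : ℕ} [NeZero N] {α : Type*}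

/-- The cyclic shift of a word `q` of length `N`, read from position `r` on. -/
def rotate (r : Fin N) : Equiv.Perm (Fin N → α) :=
  (Equiv.addLeft r).symm.arrowCongr (Equiv.refl α)

lemma rotate_apply (r : Fin N) (q : Fin N → α) (i : Fin N) : rotate r q i = q (r + i) := rfl

/-- The height after `t` steps of the path that repeats the steps of `p` periodically. -/
def cyclicHeight (p : Fin N → ℤ) (t : ℕ) : ℤ := ∑ i ∈ range t, p (Fin.ofNat N i)

lemma psum_eq_cyclicHeight (p : Fin N → ℤ) {t : ℕ} (ht : t ≤ N) :
    psum p t = cyclicHeight p t := by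
  refine sum_nbij Fin.val (by simp) Fin.val_injective.injOn (fun i hi => ?_) (by simp)
  have hit : i < t := by simpa using hi
  exact ⟨⟨i, hit.trans_le ht⟩, by simpa using hit, rfl⟩

lemma cyclicHeight_rotate (r : Fin N) (p : Fin N → ℤ) (t : ℕ) :
    cyclicHeight (rotate r p) t = cyclicHeight p (r + t) - cyclicHeight p r := by
  rw [cyclicHeight, cyclicHeight, cyclicHeight, sum_range_add, add_sub_cancel_left]
  refine sum_congr rfl fun i _ => congrArg p ?_
  ext
  simp [Fin.val_add]

lemma cyclicHeight_add_length (p : Fin N → ℤ) (t : ℕ) :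
    cyclicHeight p (t + N) = cyclicHeight p t + ∑ i, p i := by
  have shift (i : ℕ) : Fin.ofNat N (N + i) = Fin.ofNat N i := by
    ext
    simp
  simp only [cyclicHeight, add_comm t, sum_range_add, shift, sum_range (n := N),
    Fin.ofNat_val_eq_self, add_comm]

/-- The height above the line of slope `1 / N`, scaled by `N` to be an integer. It is periodic when
the steps sum to `1`, and the vertices of one period have distinct tilted heights. -/
def tiltedHeight (p : Fin N → ℤ) (t : ℕ) : ℤ := N * cyclicHeight p t - t

lemma tiltedHeight_periodic {p : Fin N → ℤ} (hp : ∑ i, p i = 1) :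
    Function.Periodic (tiltedHeight p) N := fun t => by
  simp only [tiltedHeight, cyclicHeight_add_length, hp]
  push_cast
  ring

lemma tiltedHeight_injective (p : Fin N → ℤ) :
    Function.Injective fun i : Fin N => tiltedHeight p i := by
  intro a b hab
  have hdvd : (N : ℤ) ∣ a - b :=
    ⟨cyclicHeight p a - cyclicHeight p b, by simp only [tiltedHeight] at hab; linarith⟩
  have hzero : (a - b : ℤ) = 0 := Int.eq_zero_of_abs_lt_dvd hdvd (by rw [abs_lt]; omega)
  ext
  omega

lemma tiltedHeight_add_le_iff (p : Fin N → ℤ) (r : ℕ) {i : ℕ} (hi : i < N) :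
    tiltedHeight p (r + i) ≤ tiltedHeight p r ↔ cyclicHeight p (r + i) ≤ cyclicHeight p r := by
  -- Over fewer than `N` steps the line rises by less than one unit of height.
  zify at hi
  simp only [tiltedHeight]
  push_cast
  constructor <;> intro h
  · by_contra! hlt
    nlinarith
  · nlinarith

lemma card_psum_rotate_nonpos {p : Fin N → ℤ} (hp : ∑ i, p i = 1) (r : Fin N) :
    #{m ∈ range N | psum (rotate r p) m ≤ 0} =
      #{i : Fin N | tiltedHeight p i ≤ tiltedHeight p r} := by
  have nonpos_iff (i : Fin N) : psum (rotate r p) i ≤ 0 ↔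
      tiltedHeight p (r + i : Fin N) ≤ tiltedHeight p r := by
    rw [psum_eq_cyclicHeight _ i.is_lt.le, cyclicHeight_rotate, sub_nonpos, Fin.val_add,
      (tiltedHeight_periodic hp).map_mod_nat, tiltedHeight_add_le_iff p r i.is_lt]
  calc #{m ∈ range N | psum (rotate r p) m ≤ 0}
      = #{i : Fin N | psum (rotate r p) i ≤ 0} := by simp only [card_filter, sum_range]
    _ = #{i : Fin N | tiltedHeight p i ≤ tiltedHeight p r} :=
        card_equiv (Equiv.addLeft r) fun i => by
          simp only [mem_filter_univ, nonpos_iff, Equiv.coe_addLeft]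

theorem existsUnique_rotate_card_psum_nonpos {p : Fin N → ℤ} (hp : ∑ i, p i = 1) {j : ℕ}
    (hj1 : 1 ≤ j) (hj2 : j ≤ N) :
    ∃! r, #{m ∈ range N | psum (rotate r p) m ≤ 0} = j := by
  simp only [card_psum_rotate_nonpos hp]
  exact existsUnique_card_filter_le_eq (tiltedHeight_injective p) hj1 (by simpa using hj2)

theorem card_filter_card_psum_nonpos_mul_length (w : α → ℤ) (T : Finset (Fin N → α))
    (hrot : ∀ r q, rotate r q ∈ T ↔ q ∈ T) (hsum : ∀ q ∈ T, ∑ i, w (q i) = 1) {j : ℕ}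
    (hj1 : 1 ≤ j) (hj2 : j ≤ N) :
    #{q ∈ T | #{m ∈ range N | psum (fun i => w (q i)) m ≤ 0} = j} * N = #T := by
  simpa only [Fintype.card_fin] using card_filter_mul_card_of_existsUnique rotate T
    (fun q => #{m ∈ range N | psum (fun i => w (q i)) m ≤ 0} = j) hrot
    fun q hq => existsUnique_rotate_card_psum_nonpos (hsum q hq) hj1 hj2

end Rotation

section StepWords

/-- The number of up steps of a word of steps `1` and `-1`, encoded as the units of `ℤ`. -/
def upCount {ι : Type*} [Fintype ι] (q : ι → ℤˣ) : ℕ := #{i | q i = 1}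

/-- The number of peaks of a word, not counting the one that may arise from closing it up. -/
def peakCount {m : ℕ} (q : Fin (m + 1) → ℤˣ) : ℕ :=
  #{i : Fin m | q i.castSucc = 1 ∧ q i.succ = -1}

/-- The number of circular peaks of a word, whose last step is followed by its first one. -/
def circularPeakCount {N : ℕ} [NeZero N] (q : Fin N → ℤˣ) : ℕ := #{i | q i = 1 ∧ q (i + 1) = -1}

lemma circularPeakCount_eq_peakCount_add {m : ℕ} (q : Fin (m + 1) → ℤˣ) :
    circularPeakCount q = peakCount q + if q 0 = -1 ∧ q (Fin.last m) = 1 then 1 else 0 := by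
  simp only [circularPeakCount, peakCount, card_filter, Fin.sum_univ_castSucc,
    Fin.coeSucc_eq_succ, Fin.last_add_one, and_comm]

lemma sum_coe_eq_two_mul_upCount_sub {ι : Type*} [Fintype ι] (q : ι → ℤˣ) :
    ∑ i, (q i : ℤ) = 2 * upCount q - Fintype.card ι := by
  have step_eq (i : ι) : (q i : ℤ) = 2 * (if q i = 1 then 1 else 0) - 1 := by
    obtain h | h := Int.units_eq_one_or (q i) <;> simp [h]
  simp only [upCount, card_filter, step_eq, sum_sub_distrib, ← mul_sum]
  simp

lemma upCount_rotate {N : ℕ} [NeZero N] (r : Fin N) (q : Fin N → ℤˣ) :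
    upCount (rotate r q) = upCount q :=
  card_equiv (Equiv.addLeft r) fun i => by
    rw [mem_filter_univ, mem_filter_univ, rotate_apply, Equiv.coe_addLeft]

lemma circularPeakCount_rotate {N : ℕ} [NeZero N] (r : Fin N) (q : Fin N → ℤˣ) :
    circularPeakCount (rotate r q) = circularPeakCount q :=
  card_equiv (Equiv.addLeft r) fun i => by
    rw [mem_filter_univ, mem_filter_univ, rotate_apply, rotate_apply, Equiv.coe_addLeft, add_assoc]

/-- The word obtained by reading the closed-up word `q` backwards from its first step and
exchanging up and down steps. -/
def reflect {N : ℕ} [NeZero N] (q : Fin N → ℤˣ) : Fin N → ℤˣ := fun i => -q (-i)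

lemma reflect_involutive {N : ℕ} [NeZero N] :
    Function.Involutive (reflect : (Fin N → ℤˣ) → Fin N → ℤˣ) := fun q => by
  ext i
  simp [reflect]

lemma upCount_reflect_add_upCount {N : ℕ} [NeZero N] (q : Fin N → ℤˣ) :
    upCount (reflect q) + upCount q = N := by
  have upCount_reflect : upCount (reflect q) = #{i | ¬q i = 1} :=
    card_equiv (Equiv.neg _) fun i => by simp [reflect, neg_eq_iff_eq_neg, Int.units_ne_iff_eq_neg]
  rw [upCount_reflect, upCount, add_comm, card_filter_add_card_filter_not, card_univ,
    Fintype.card_fin]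

lemma circularPeakCount_reflect {N : ℕ} [NeZero N] (q : Fin N → ℤˣ) :
    circularPeakCount (reflect q) = circularPeakCount q :=
  card_equiv (Equiv.subLeft (-1)) fun i => by
    simp [reflect, neg_eq_iff_eq_neg, and_comm, sub_eq_add_neg, add_comm]

lemma natCard_signs_eq_natCard_units {ι : Type*} (P : (ι → ℤ) → Prop) :
    Nat.card {p : ι → ℤ // (∀ i, p i = 1 ∨ p i = -1) ∧ P p} =
      Nat.card {q : ι → ℤˣ // P fun i => q i} := by
  symm
  refine Nat.card_eq_of_bijective
    (fun q => ⟨fun i => q.1 i, fun i => Int.isUnit_iff.1 (q.1 i).isUnit, q.2⟩) ⟨?_, ?_⟩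
  · intro q q' h
    exact Subtype.ext <| funext fun i => Units.ext <| congrFun (congrArg Subtype.val h) i
  · rintro ⟨p, hp, hP⟩
    choose q hq using fun i => Int.isUnit_iff.2 (hp i)
    obtain rfl : (fun i => (q i : ℤ)) = p := funext hq
    exact ⟨⟨q, hP⟩, rfl⟩

end StepWords

section PeakEnumeration

/-- The number of compositions of `b` into `k` positive parts, in closed form. -/
def compositionCount : ℕ → ℕ → ℕ
  | 0, 0 => 1
  | 0, _ + 1 => 0
  | _ + 1, 0 => 0
  | b + 1, k + 1 => b.choose k

lemma compositionCount_eq_choose {b k : ℕ} (hb : 1 ≤ b) (hk : 1 ≤ k) :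
    compositionCount b k = (b - 1).choose (k - 1) := by
  obtain ⟨b, rfl⟩ := Nat.exists_eq_add_of_le' hb
  obtain ⟨k, rfl⟩ := Nat.exists_eq_add_of_le' hk
  rfl

lemma choose_succ_eq_choose_add_compositionCount (b k : ℕ) :
    (b + 1).choose k = b.choose k + compositionCount (b + 1) k := by
  cases k with
  | zero => simp [compositionCount]
  | succ k => rw [Nat.choose_succ_succ, compositionCount, add_comm]

/-- The number of words of length `N` with `a` up steps that have `k` peaks when a step `c` is
put in front of them. -/
def wordCount (c : ℤˣ) (N a k : ℕ) : ℕ :=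
  #{q : Fin N → ℤˣ | upCount q = a ∧ peakCount (Fin.cons c q) = k}

variable {N : ℕ}

lemma card_filter_cons (P : (Fin (N + 1) → ℤˣ) → Prop) [DecidablePred P] :
    #{q | P q} = #{q : Fin N → ℤˣ | P (Fin.cons 1 q)} +
      #{q : Fin N → ℤˣ | P (Fin.cons (-1) q)} := by
  simp only [card_filter]
  rw [← (Fin.consEquiv fun _ => ℤˣ).sum_comp, Fintype.sum_prod_type, UnitsInt.univ,
    sum_pair (by decide)]
  rfl

lemma upCount_cons (x : ℤˣ) (q : Fin N → ℤˣ) :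
    upCount (Fin.cons x q : Fin (N + 1) → ℤˣ) = upCount q + if x = 1 then 1 else 0 := by
  simp only [upCount, card_filter, Fin.sum_univ_succ, Fin.cons_zero, Fin.cons_succ, add_comm]

lemma peakCount_cons_cons (c x : ℤˣ) (q : Fin N → ℤˣ) :
    peakCount (Fin.cons c (Fin.cons x q : Fin (N + 1) → ℤˣ)) =
      peakCount (Fin.cons x q) + if c = 1 ∧ x = -1 then 1 else 0 := by
  simp only [peakCount, card_filter, Fin.sum_univ_succ (n := N), Fin.castSucc_zero,
    ← Fin.succ_castSucc, Fin.cons_zero, Fin.cons_succ, add_comm]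

lemma wordCount_succ (c : ℤˣ) (a k : ℕ) :
    wordCount c (N + 1) a k =
      #{q : Fin N → ℤˣ | upCount q + 1 = a ∧ peakCount (Fin.cons 1 q) = k} +
      #{q : Fin N → ℤˣ | upCount q = a ∧
        peakCount (Fin.cons (-1) q) + (if c = 1 then 1 else 0) = k} := by
  simp [wordCount, card_filter_cons, upCount_cons, peakCount_cons_cons]

lemma wordCount_eq_zero_of_lt (c : ℤˣ) {a : ℕ} (k : ℕ) (h : N < a) : wordCount c N a k = 0 := by
  refine card_eq_zero.2 <| filter_eq_empty_iff.2 ?_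
  rintro q - ⟨rfl, -⟩
  exact h.not_ge ((card_le_univ _).trans_eq (Fintype.card_fin N))

lemma wordCount_neg_one_succ_zero (k : ℕ) :
    wordCount (-1) (N + 1) 0 k = wordCount (-1) N 0 k := by
  rw [wordCount_succ]
  simp [wordCount]

lemma wordCount_neg_one_succ_succ (a k : ℕ) :
    wordCount (-1) (N + 1) (a + 1) k = wordCount 1 N a k + wordCount (-1) N (a + 1) k := by
  rw [wordCount_succ]
  simp [wordCount]

lemma wordCount_one_succ_zero_zero : wordCount 1 (N + 1) 0 0 = 0 := by
  simp [wordCount_succ]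

lemma wordCount_one_succ_zero_succ (k : ℕ) :
    wordCount 1 (N + 1) 0 (k + 1) = wordCount (-1) N 0 k := by
  rw [wordCount_succ]
  simp [wordCount]

lemma wordCount_one_succ_succ_zero (a : ℕ) :
    wordCount 1 (N + 1) (a + 1) 0 = wordCount 1 N a 0 := by
  rw [wordCount_succ]
  simp [wordCount]

lemma wordCount_one_succ_succ_succ (a k : ℕ) :
    wordCount 1 (N + 1) (a + 1) (k + 1) =
      wordCount 1 N a (k + 1) + wordCount (-1) N (a + 1) k := by
  rw [wordCount_succ]
  simp [wordCount]

lemma wordCount_zero_zero (c : ℤˣ) (k : ℕ) : wordCount c 0 0 k = Nat.choose 0 k := by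
  cases k <;> simp [wordCount, upCount, peakCount]

lemma wordCount_neg_one_zero_ups (k : ℕ) : wordCount (-1) N 0 k = Nat.choose 0 k := by
  induction N with
  | zero => exact wordCount_zero_zero _ k
  | succ N ih => rw [wordCount_neg_one_succ_zero, ih]

lemma wordCount_one_zero_ups (k : ℕ) :
    wordCount 1 N 0 k = Nat.choose 1 k * compositionCount N k := by
  obtain _ | N := N <;> obtain _ | k := k
  · simp [wordCount_zero_zero, compositionCount]
  · simp [wordCount_zero_zero, compositionCount]
  · simp [wordCount_one_succ_zero_zero, compositionCount]
  · rw [wordCount_one_succ_zero_succ, wordCount_neg_one_zero_ups, compositionCount]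
    cases k <;> simp [Nat.choose_eq_zero_iff]

lemma wordCount_self (c : ℤˣ) (k : ℕ) : wordCount c N N k = Nat.choose 0 k := by
  induction N generalizing c with
  | zero => exact wordCount_zero_zero c k
  | succ N ih =>
    have too_many_ups (k : ℕ) : wordCount (-1) N (N + 1) k = 0 :=
      wordCount_eq_zero_of_lt _ k N.lt_succ_self
    obtain rfl | rfl := Int.units_eq_one_or c
    · cases k with
      | zero => rw [wordCount_one_succ_succ_zero, ih]
      | succ k => rw [wordCount_one_succ_succ_succ, ih, too_many_ups, add_zero]
    · rw [wordCount_neg_one_succ_succ, ih, too_many_ups, add_zero]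

theorem wordCount_eq (a b k : ℕ) :
    wordCount (-1) (a + b) a k = a.choose k * b.choose k ∧
      wordCount 1 (a + b) a k = (a + 1).choose k * compositionCount b k := by
  induction a generalizing b k with
  | zero =>
    rw [zero_add, wordCount_neg_one_zero_ups, wordCount_one_zero_ups]
    refine ⟨?_, rfl⟩
    cases k <;> simp
  | succ a iha =>
    induction b generalizing k with
    | zero =>
      rw [add_zero, wordCount_self, wordCount_self]
      cases k <;> simp [compositionCount]
    | succ b ihb =>
      have length_eq : a + (b + 1) = a + 1 + b := by omega
      rw [← add_assoc, wordCount_neg_one_succ_succ, (ihb k).1, ← length_eq, (iha (b + 1) k).2,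
        choose_succ_eq_choose_add_compositionCount b k]
      refine ⟨by ring, ?_⟩
      cases k with
      | zero =>
        rw [wordCount_one_succ_succ_zero, (iha (b + 1) 0).2]
        simp [compositionCount]
      | succ k =>
        rw [wordCount_one_succ_succ_succ, (iha (b + 1) (k + 1)).2, length_eq, (ihb k).1,
          compositionCount, Nat.choose_succ_succ (a + 1) k]
        ring

lemma card_circularPeakCount_first_up {m a b : ℕ} (h : a + b = m + 1) (k : ℕ) :
    #{q : Fin (m + 1) → ℤˣ | q 0 = 1 ∧ upCount q = a ∧ circularPeakCount q = k} =
      a.choose k * compositionCount b k := by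
  obtain _ | a := a
  · have no_up : #{q : Fin (m + 1) → ℤˣ | q 0 = 1 ∧ upCount q = 0 ∧
        circularPeakCount q = k} = 0 := by
      refine card_eq_zero.2 <| filter_eq_empty_iff.2 fun q _ ⟨h_first, h_up, _⟩ => ?_
      exact filter_eq_empty_iff.1 (card_eq_zero.1 h_up) (mem_univ 0) h_first
    obtain rfl : b = m + 1 := by omega
    rw [no_up]
    cases k <;> simp [compositionCount]
  · obtain rfl : m = a + b := by omega
    rw [← (wordCount_eq a b k).2, wordCount, card_filter_cons]
    simp [upCount_cons, circularPeakCount_eq_peakCount_add]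

lemma card_circularPeakCount_first_down {m a b : ℕ} (h : a + b = m + 1) (k : ℕ) :
    #{q : Fin (m + 1) → ℤˣ | q 0 = -1 ∧ upCount q = a ∧ circularPeakCount q = k} =
      b.choose k * compositionCount a k := by
  rw [← card_circularPeakCount_first_up (add_comm b a ▸ h) k]
  refine card_equiv reflect_involutive.toPerm fun q => ?_
  have upCount_add := upCount_reflect_add_upCount q
  have upCount_iff : upCount (reflect q) = b ↔ upCount q = a := by omega
  have first_iff : reflect q 0 = 1 ↔ q 0 = -1 := by simp [reflect, neg_eq_iff_eq_neg]
  simp only [mem_filter_univ, Function.Involutive.coe_toPerm, first_iff, upCount_iff,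
    circularPeakCount_reflect]

theorem card_circularPeakCount_eq {m a b : ℕ} (h : a + b = m + 1) (k : ℕ) :
    #{q : Fin (m + 1) → ℤˣ | upCount q = a ∧ circularPeakCount q = k} =
      a.choose k * compositionCount b k + b.choose k * compositionCount a k := by
  rw [← card_circularPeakCount_first_up h, ← card_circularPeakCount_first_down h,
    ← card_filter_add_card_filter_not (fun q : Fin (m + 1) → ℤˣ => q 0 = 1)]
  simp only [filter_filter, Int.units_ne_iff_eq_neg, and_comm]

end PeakEnumeration

end ChungFeller

open ChungFeller

/-- Among paths in 𝒫(n,1,1) with exactly `k` circular peaks (peaks, plus one more if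
the path starts with a down step and ends with an up step), for each `1 ≤ j ≤ 2n+1`
the number with exactly `j` of the vertices `s_0, …, s_{2n}` on or below the x-axis
is `(1/(2n+1))·(C(n,k-1)·C(n,k) + C(n+1,k)·C(n-1,k-1))`. -/
theorem narayana_chung_feller_circular_peaks (n k : ℕ) (hn : 1 ≤ n) (hk : 1 ≤ k)
    (j : ℕ) (hj1 : 1 ≤ j) (hj2 : j ≤ 2*n + 1) :
    Nat.card {p : Fin (2*n+1) → ℤ //
      (∀ i, p i = 1 ∨ p i = -1) ∧
      (univ.filter (fun i => p i = 1)).card = n + 1 ∧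
      ((univ.filter (fun i : Fin (2*n) => p i.castSucc = 1 ∧ p i.succ = -1)).card
        + (if p ⟨0, Nat.succ_pos _⟩ = -1 ∧ p (Fin.last (2*n)) = 1 then 1 else 0)) = k ∧
      (((Finset.range (2*n+1)).filter (fun m => psum p m ≤ 0)).card = j) }
      * (2*n + 1) =
      Nat.choose n (k-1) * Nat.choose n k + Nat.choose (n+1) k * Nat.choose (n-1) (k-1) := by
  let T : Finset (Fin (2 * n + 1) → ℤˣ) := {q | upCount q = n + 1 ∧ circularPeakCount q = k}
  have rotate_mem_iff (r) (q) : rotate r q ∈ T ↔ q ∈ T := by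
    simp only [T, mem_filter_univ, upCount_rotate, circularPeakCount_rotate]
  have sum_eq_one (q) (hq : q ∈ T) : ∑ i, (q i : ℤ) = 1 := by
    rw [sum_coe_eq_two_mul_upCount_sub, (mem_filter_univ q |>.1 hq).1, Fintype.card_fin]
    push_cast
    ring
  rw [natCard_signs_eq_natCard_units, Nat.subtype_card
      {q ∈ T | #{m ∈ range (2 * n + 1) | psum (fun i => (q i : ℤ)) m ≤ 0} = j},
    card_filter_card_psum_nonpos_mul_length _ T rotate_mem_iff sum_eq_one hj1 hj2,
    card_circularPeakCount_eq (by omega : n + 1 + n = 2 * n + 1),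
    compositionCount_eq_choose hn hk, compositionCount_eq_choose n.succ_pos hk,
    Nat.succ_sub_one, add_comm, mul_comm (n.choose k)]
  intro q
  simp [T, and_assoc, upCount, circularPeakCount_eq_peakCount_add, peakCount]
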